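/- Let Φ denote the standard normal CDF and φ the standard normal density. As K → ∞, E[K·φ(X)²·Φ(X)^{K−3}] = Θ((log K)/K²), where X ~ N(0,1). -/

import Mathlib

open MeasureTheory

/-- The standard normal density. -/
noncomputable def stdNormalPdf (x : ℝ) : ℝ :=
  (Real.sqrt (2 * Real.pi))⁻¹ * Real.exp (-(x ^ 2) / 2)

/-- The standard normal cumulative distribution function. -/
noncomputable def stdNormalCdf (x : ℝ) : ℝ := ∫ t in Set.Iic x, stdNormalPdf t

open Filter Topology

lemma stdNormalPdf_eq_gaussianPDFReal :
    stdNormalPdf = ProbabilityTheory.gaussianPDFReal 0 1 := by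
  funext x
  simp [stdNormalPdf, ProbabilityTheory.gaussianPDFReal]

lemma stdNormalPdf_pos (x : ℝ) : 0 < stdNormalPdf x := by
  unfold stdNormalPdf
  positivity

lemma stdNormalPdf_le_one (x : ℝ) : stdNormalPdf x ≤ 1 := by
  unfold stdNormalPdf
  refine mul_le_one₀ (inv_le_one_of_one_le₀ ?_) (Real.exp_nonneg _) ?_
  · rw [Real.one_le_sqrt]
    linarith [Real.pi_gt_three]
  · rw [Real.exp_le_one_iff]
    nlinarith [sq_nonneg x]

lemma continuous_stdNormalPdf : Continuous stdNormalPdf := by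
  unfold stdNormalPdf
  fun_prop

lemma integrable_stdNormalPdf : Integrable stdNormalPdf := by
  rw [stdNormalPdf_eq_gaussianPDFReal]
  exact ProbabilityTheory.integrable_gaussianPDFReal 0 1

lemma integral_stdNormalPdf : ∫ x, stdNormalPdf x = 1 := by
  rw [stdNormalPdf_eq_gaussianPDFReal]
  exact ProbabilityTheory.integral_gaussianPDFReal_eq_one 0 one_ne_zero

lemma hasDerivAt_stdNormalPdf (x : ℝ) :
    HasDerivAt stdNormalPdf (-x * stdNormalPdf x) x := by
  unfold stdNormalPdf
  have h : HasDerivAt (fun y : ℝ => -(y ^ 2) / 2) (-x) x := by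
    exact ((hasDerivAt_pow 2 x).fun_neg.div_const 2).congr_deriv (by simp; ring)
  exact (h.exp.const_mul (Real.sqrt (2 * Real.pi))⁻¹).congr_deriv (by ring)

lemma stdNormalCdf_nonneg (x : ℝ) : 0 ≤ stdNormalCdf x :=
  integral_nonneg fun t => (stdNormalPdf_pos t).le

lemma one_sub_stdNormalCdf (x : ℝ) : 1 - stdNormalCdf x = ∫ t in Set.Ioi x, stdNormalPdf t := by
  have h := integral_add_compl (measurableSet_Iic (a := x)) integrable_stdNormalPdf
  rw [Set.compl_Iic, integral_stdNormalPdf] at h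
  unfold stdNormalCdf
  linarith

lemma stdNormalCdf_le_one (x : ℝ) : stdNormalCdf x ≤ 1 := by
  have h : 0 ≤ ∫ t in Set.Ioi x, stdNormalPdf t := integral_nonneg fun t => (stdNormalPdf_pos t).le
  linarith [one_sub_stdNormalCdf x]

lemma hasDerivAt_stdNormalCdf (x : ℝ) : HasDerivAt stdNormalCdf (stdNormalPdf x) x := by
  have h : stdNormalCdf = fun y => stdNormalCdf 0 + ∫ t in (0 : ℝ)..y, stdNormalPdf t := by
    funext y
    have := intervalIntegral.integral_Iic_sub_Iic (a := 0) (b := y)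
      integrable_stdNormalPdf.integrableOn integrable_stdNormalPdf.integrableOn
    unfold stdNormalCdf
    linarith
  rw [h]
  exact (intervalIntegral.integral_hasDerivAt_right
    integrable_stdNormalPdf.intervalIntegrable
    (continuous_stdNormalPdf.stronglyMeasurableAtFilter _ _)
    continuous_stdNormalPdf.continuousAt).const_add _

lemma continuous_stdNormalCdf : Continuous stdNormalCdf :=
  continuous_iff_continuousAt.2 fun x => (hasDerivAt_stdNormalCdf x).continuousAt

lemma hasDerivAt_stdNormalCdf_pow (m : ℕ) (x : ℝ) :
    HasDerivAt (fun y => stdNormalCdf y ^ (m + 1))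
      ((m + 1) * (stdNormalPdf x * stdNormalCdf x ^ m)) x := by
  refine ((hasDerivAt_stdNormalCdf x).fun_pow (m + 1)).congr_deriv ?_
  push_cast
  ring

lemma tendsto_stdNormalCdf_atTop : Tendsto stdNormalCdf atTop (𝓝 1) := by
  have h := (aecover_Iic (μ := volume) (tendsto_id (α := ℝ) (x := atTop))
    ).integral_tendsto_of_countably_generated integrable_stdNormalPdf
  rwa [integral_stdNormalPdf] at h

lemma integrable_exp_sq_mul_stdNormalPdf :
    Integrable fun x => Real.exp (x ^ 2 / 4) * stdNormalPdf x := by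
  refine ((integrable_exp_neg_mul_sq (b := 1 / 4) (by norm_num)).const_mul
    (Real.sqrt (2 * Real.pi))⁻¹).congr (ae_of_all _ fun x => ?_)
  simp only [stdNormalPdf]
  rw [mul_left_comm, ← Real.exp_add]
  ring_nf

lemma integrable_mul_stdNormalCdf_pow {g : ℝ → ℝ} (hg : Continuous g) {C : ℝ}
    (h : ∀ x, |g x| ≤ C * (Real.exp (x ^ 2 / 4) * stdNormalPdf x)) (m : ℕ) :
    Integrable fun x => g x * stdNormalCdf x ^ m := by
  refine (integrable_exp_sq_mul_stdNormalPdf.const_mul C).mono'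
    (hg.mul (continuous_stdNormalCdf.pow m)).aestronglyMeasurable (ae_of_all _ fun x => ?_)
  rw [Real.norm_eq_abs, abs_mul, abs_of_nonneg (pow_nonneg (stdNormalCdf_nonneg x) m)]
  exact (mul_le_of_le_one_right (abs_nonneg _)
    (pow_le_one₀ (stdNormalCdf_nonneg x) (stdNormalCdf_le_one x))).trans (h x)

lemma abs_le_of_le_quadratic_mul_stdNormalPdf {x y : ℝ}
    (h : |y| ≤ (1 + x ^ 2) * stdNormalPdf x) :
    |y| ≤ 4 * (Real.exp (x ^ 2 / 4) * stdNormalPdf x) := by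
  refine h.trans ?_
  rw [← mul_assoc]
  refine mul_le_mul_of_nonneg_right ?_ (stdNormalPdf_pos x).le
  linarith [Real.add_one_le_exp (x ^ 2 / 4)]

lemma integrable_mul_stdNormalCdf_pow_of_quadratic {g : ℝ → ℝ} (hg : Continuous g)
    (h : ∀ x, |g x| ≤ (1 + x ^ 2) * stdNormalPdf x) (m : ℕ) :
    Integrable fun x => g x * stdNormalCdf x ^ m :=
  integrable_mul_stdNormalCdf_pow hg
    (fun x => abs_le_of_le_quadratic_mul_stdNormalPdf (h x)) m

lemma stdNormalPdf_pow_le (n : ℕ) (x : ℝ) : stdNormalPdf x ^ (n + 1) ≤ stdNormalPdf x :=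
  pow_le_of_le_one (stdNormalPdf_pos x).le (stdNormalPdf_le_one x) n.succ_ne_zero

lemma abs_mul_stdNormalPdf_pow_le {p : ℝ} {x : ℝ} (hp : |p| ≤ 1 + x ^ 2) (n : ℕ) :
    |p * stdNormalPdf x ^ (n + 1)| ≤ (1 + x ^ 2) * stdNormalPdf x := by
  rw [abs_mul, abs_of_pos (pow_pos (stdNormalPdf_pos x) _)]
  exact mul_le_mul hp (stdNormalPdf_pow_le n x) (pow_pos (stdNormalPdf_pos x) _).le (by positivity)

lemma abs_le_one_add_sq (x : ℝ) : |x| ≤ 1 + x ^ 2 := by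
  rw [abs_le]
  constructor <;> nlinarith [sq_nonneg (x - 1), sq_nonneg (x + 1)]

lemma integrable_poly_mul_stdNormalPdf_pow {p : ℝ → ℝ} (hp : Continuous p)
    (h : ∀ x, |p x| ≤ 1 + x ^ 2) (n m : ℕ) :
    Integrable fun x => p x * stdNormalPdf x ^ (n + 1) * stdNormalCdf x ^ m :=
  integrable_mul_stdNormalCdf_pow_of_quadratic (hp.mul (continuous_stdNormalPdf.pow _))
    (fun x => abs_mul_stdNormalPdf_pow_le (h x) n) m

lemma integrable_stdNormalPdf_mul_pow (m : ℕ) :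
    Integrable fun x => stdNormalPdf x * stdNormalCdf x ^ m := by
  simpa using integrable_poly_mul_stdNormalPdf_pow (p := fun _ => 1) continuous_const
    (fun x => by simp [sq_nonneg]) 0 m

lemma integral_Ioi_stdNormalPdf_mul_pow (m : ℕ) (a : ℝ) :
    (m + 1) * ∫ x in Set.Ioi a, stdNormalPdf x * stdNormalCdf x ^ m
      = 1 - stdNormalCdf a ^ (m + 1) := by
  have hintegrable := integrable_stdNormalPdf_mul_pow m
  rw [← integral_const_mul]
  have h := integral_Ioi_of_hasDerivAt_of_tendsto' (a := a)
    (fun x _ => hasDerivAt_stdNormalCdf_pow m x) (hintegrable.const_mul ((m : ℝ) + 1)).integrableOn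
    (tendsto_stdNormalCdf_atTop.pow (m + 1))
  simpa using h

lemma integral_stdNormalPdf_mul_pow_le (m : ℕ) :
    (m + 1) * ∫ x, stdNormalPdf x * stdNormalCdf x ^ m ≤ 1 := by
  have hintegrable := integrable_stdNormalPdf_mul_pow m
  have h := (aecover_Ioi (μ := volume) (tendsto_id (α := ℝ) (x := atBot))
    ).integral_tendsto_of_countably_generated hintegrable
  refine le_of_tendsto (h.const_mul ((m : ℝ) + 1)) (Eventually.of_forall fun a => ?_)
  simp only [id]
  rw [integral_Ioi_stdNormalPdf_mul_pow]
  linarith [pow_nonneg (stdNormalCdf_nonneg a) (m + 1)]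

/-- Integration by parts against the derivative of a power of the cumulative distribution
function. -/
lemma integral_mul_stdNormalPdf_mul_pow {g g' : ℝ → ℝ} (hg : ∀ x, HasDerivAt g (g' x) x) (m : ℕ)
    (h : Integrable fun x => g x * stdNormalPdf x * stdNormalCdf x ^ m)
    (h' : Integrable fun x => g' x * stdNormalCdf x ^ (m + 1))
    (h0 : Integrable fun x => g x * stdNormalCdf x ^ (m + 1)) :
    (m + 1) * ∫ x, g x * stdNormalPdf x * stdNormalCdf x ^ m
      = - ∫ x, g' x * stdNormalCdf x ^ (m + 1) := by
  rw [← integral_mul_deriv_eq_deriv_mul_of_integrable (fun x _ => hg x)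
    (fun x _ => hasDerivAt_stdNormalCdf_pow m x) _ h' h0, ← integral_const_mul]
  · exact integral_congr_ae (ae_of_all _ fun x => by ring)
  · exact (h.const_mul ((m : ℝ) + 1)).congr (ae_of_all _ fun x => by
      simp only [Pi.mul_apply]; ring)

lemma integral_stdNormalPdf_cube_mul_pow (m : ℕ) :
    (m + 1) * ((m + 2) * ∫ x, stdNormalPdf x ^ 3 * stdNormalCdf x ^ m)
      = 2 * ∫ x, (x ^ 2 - 1) * stdNormalPdf x * stdNormalCdf x ^ (m + 2) := by
  have hparts_sq := integral_mul_stdNormalPdf_mul_pow (g := fun x => stdNormalPdf x ^ 2)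
    (g' := fun x => -2 * (x * stdNormalPdf x ^ 2))
    (fun x => ((hasDerivAt_stdNormalPdf x).fun_pow 2).congr_deriv (by simp; ring)) m
    ((integrable_poly_mul_stdNormalPdf_pow (p := fun _ => 1) continuous_const
      (fun x => by simp [sq_nonneg]) 2 m).congr (ae_of_all _ fun x => by simp only []; ring))
    (((integrable_poly_mul_stdNormalPdf_pow (p := fun x => x) continuous_id
      abs_le_one_add_sq 1 (m + 1)).const_mul (-2)).congr (ae_of_all _ fun x => by simp only []; ring))
    ((integrable_poly_mul_stdNormalPdf_pow (p := fun _ => 1) continuous_const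
      (fun x => by simp [sq_nonneg]) 1 (m + 1)).congr (ae_of_all _ fun x => by simp only []; ring))
  have hparts_linear := integral_mul_stdNormalPdf_mul_pow (g := fun x => x * stdNormalPdf x)
    (g' := fun x => -((x ^ 2 - 1) * stdNormalPdf x))
    (fun x => ((hasDerivAt_id' x).fun_mul (hasDerivAt_stdNormalPdf x)).congr_deriv (by ring))
    (m + 1)
    ((integrable_poly_mul_stdNormalPdf_pow (p := fun x => x) continuous_id
      abs_le_one_add_sq 1 (m + 1)).congr (ae_of_all _ fun x => by simp only []; ring))
    ((integrable_poly_mul_stdNormalPdf_pow (p := fun x => 1 - x ^ 2) (by fun_prop)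
      (fun x => by rw [abs_le]; constructor <;> nlinarith [sq_nonneg x])
      0 (m + 2)).congr (ae_of_all _ fun x => by simp only []; ring))
    ((integrable_poly_mul_stdNormalPdf_pow (p := fun x => x) continuous_id
      abs_le_one_add_sq 0 (m + 2)).congr (ae_of_all _ fun x => by simp only []; ring))
  have hcube : ∫ x, stdNormalPdf x ^ 2 * stdNormalPdf x * stdNormalCdf x ^ m
      = ∫ x, stdNormalPdf x ^ 3 * stdNormalCdf x ^ m := by simp only [← pow_succ]
  have hlinear : ∫ x, -2 * (x * stdNormalPdf x ^ 2) * stdNormalCdf x ^ (m + 1)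
      = -2 * ∫ x, x * stdNormalPdf x * stdNormalPdf x * stdNormalCdf x ^ (m + 1) := by
    rw [← integral_const_mul]; congr 1; funext x; ring
  have hquadratic : ∫ x, -((x ^ 2 - 1) * stdNormalPdf x) * stdNormalCdf x ^ (m + 1 + 1)
      = - ∫ x, (x ^ 2 - 1) * stdNormalPdf x * stdNormalCdf x ^ (m + 2) := by
    rw [← integral_neg]; congr 1; funext x; ring
  rw [hcube, hlinear] at hparts_sq
  rw [hquadratic] at hparts_linear
  push_cast at hparts_linear
  linear_combination ((m : ℝ) + 2) * hparts_sq + 2 * hparts_linear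

lemma integrable_sq_mul_stdNormalPdf_mul_pow (m : ℕ) :
    Integrable fun x => x ^ 2 * stdNormalPdf x * stdNormalCdf x ^ m := by
  simpa using integrable_poly_mul_stdNormalPdf_pow (p := fun x => x ^ 2) (by fun_prop)
    (fun x => by rw [abs_of_nonneg (sq_nonneg x)]; linarith) 0 m

/-- The second moment of the maximum of `m + 1` independent standard normal variables is at most
`4 log (m + 1)` up to an additive constant. -/
lemma integral_sq_mul_stdNormalPdf_mul_pow_le (m : ℕ) :
    (m + 1) * ∫ x, x ^ 2 * stdNormalPdf x * stdNormalCdf x ^ m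
      ≤ 4 * (∫ x, Real.exp (x ^ 2 / 4) * stdNormalPdf x) + 4 * Real.log (m + 1) := by
  have hm : (0 : ℝ) < m + 1 := by positivity
  have hlog : 0 ≤ Real.log (m + 1) := Real.log_nonneg (by linarith [Nat.cast_nonneg (α := ℝ) m])
  have hle : ∫ x, (m + 1) * (x ^ 2 * stdNormalPdf x * stdNormalCdf x ^ m)
      ≤ ∫ x, (4 * (Real.exp (x ^ 2 / 4) * stdNormalPdf x)
        + 4 * Real.log (m + 1) * ((m + 1) * (stdNormalPdf x * stdNormalCdf x ^ m))) := by
    refine integral_mono ((integrable_sq_mul_stdNormalPdf_mul_pow m).const_mul _)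
      ((integrable_exp_sq_mul_stdNormalPdf.const_mul 4).add
        (((integrable_stdNormalPdf_mul_pow m).const_mul _).const_mul _)) fun x => ?_
    have hexp : (m + 1) * x ^ 2 ≤ 4 * Real.exp (x ^ 2 / 4) + 4 * Real.log (m + 1) * (m + 1) := by
      have h := Real.add_one_le_exp (x ^ 2 / 4 - Real.log (m + 1))
      rw [Real.exp_sub, Real.exp_log hm, le_div_iff₀ hm] at h
      nlinarith
    have hpow := pow_nonneg (stdNormalCdf_nonneg x) m
    have hpow' := pow_le_one₀ (n := m) (stdNormalCdf_nonneg x) (stdNormalCdf_le_one x)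
    have hpdf := stdNormalPdf_pos x
    have h1 := mul_le_mul_of_nonneg_right hexp (mul_nonneg hpdf.le hpow)
    have h2 := mul_le_of_le_one_right
      (mul_nonneg (Real.exp_nonneg (x ^ 2 / 4)) hpdf.le) hpow'
    simp only []
    linarith
  rw [integral_const_mul, integral_add (integrable_exp_sq_mul_stdNormalPdf.const_mul 4)
    (((integrable_stdNormalPdf_mul_pow m).const_mul _).const_mul _), integral_const_mul,
    integral_const_mul, integral_const_mul] at hle
  have h := mul_le_mul_of_nonneg_left (integral_stdNormalPdf_mul_pow_le m)
    (show 0 ≤ 4 * Real.log (m + 1) by positivity)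
  linarith

lemma stdNormalPdf_add_one_le_one_sub_stdNormalCdf {a : ℝ} (ha : 0 ≤ a) :
    stdNormalPdf (a + 1) ≤ 1 - stdNormalCdf a := by
  rw [one_sub_stdNormalCdf]
  calc stdNormalPdf (a + 1) = ∫ _ in Set.Ioc a (a + 1), stdNormalPdf (a + 1) := by simp
    _ ≤ ∫ t in Set.Ioc a (a + 1), stdNormalPdf t := by
      refine setIntegral_mono_on (by simp) integrable_stdNormalPdf.integrableOn
        measurableSet_Ioc fun t ht => ?_
      unfold stdNormalPdf
      have : t ^ 2 ≤ (a + 1) ^ 2 := pow_le_pow_left₀ (ha.trans ht.1.le) ht.2 2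
      gcongr
    _ ≤ ∫ t in Set.Ioi a, stdNormalPdf t :=
      setIntegral_mono_set integrable_stdNormalPdf.integrableOn
        (ae_of_all _ fun t => (stdNormalPdf_pos t).le) Set.Ioc_subset_Ioi_self.eventuallyLE

lemma stdNormalCdf_sqrt_log_pow_le (m : ℕ) :
    stdNormalCdf (Real.sqrt (Real.log (m + 1))) ^ (m + 1)
      ≤ Real.exp (-((Real.sqrt (2 * Real.pi))⁻¹ * Real.exp (-1))) := by
  have hm : (0 : ℝ) < m + 1 := by positivity
  have hlog : 0 ≤ Real.log (m + 1) := Real.log_nonneg (by linarith [Nat.cast_nonneg (α := ℝ) m])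
  set a := Real.sqrt (Real.log (m + 1)) with ha
  have ha0 : 0 ≤ a := Real.sqrt_nonneg _
  have hsq : a ^ 2 = Real.log (m + 1) := Real.sq_sqrt hlog
  set c := (Real.sqrt (2 * Real.pi))⁻¹ * Real.exp (-1) with hc
  have htail : c / (m + 1) ≤ 1 - stdNormalCdf a := by
    refine le_trans ?_ (stdNormalPdf_add_one_le_one_sub_stdNormalCdf ha0)
    have h : Real.exp (-1) / (m + 1) = Real.exp (-1 - a ^ 2) := by
      rw [Real.exp_sub, hsq, Real.exp_log hm]
    rw [hc, mul_div_assoc, h]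
    unfold stdNormalPdf
    gcongr
    nlinarith [sq_nonneg (a - 1)]
  calc stdNormalCdf a ^ (m + 1) ≤ Real.exp (-(c / (m + 1))) ^ (m + 1) := by
        refine pow_le_pow_left₀ (stdNormalCdf_nonneg a) ?_ _
        linarith [Real.add_one_le_exp (-(c / (m + 1)))]
    _ = Real.exp (-c) := by
        rw [← Real.exp_nat_mul]
        congr 1
        push_cast
        field_simp

/-- The second moment of the maximum of `m + 1` independent standard normal variables is at least
a constant multiple of `log (m + 1)`. -/
lemma le_integral_sq_mul_stdNormalPdf_mul_pow (m : ℕ) :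
    (1 - Real.exp (-((Real.sqrt (2 * Real.pi))⁻¹ * Real.exp (-1)))) * Real.log (m + 1)
      ≤ (m + 1) * ∫ x, x ^ 2 * stdNormalPdf x * stdNormalCdf x ^ m := by
  have hm : (0 : ℝ) < m + 1 := by positivity
  have hlog : 0 ≤ Real.log (m + 1) := Real.log_nonneg (by linarith [Nat.cast_nonneg (α := ℝ) m])
  have hpow := stdNormalCdf_sqrt_log_pow_le m
  set a := Real.sqrt (Real.log (m + 1)) with ha
  have ha0 : 0 ≤ a := Real.sqrt_nonneg _
  have hsq : a ^ 2 = Real.log (m + 1) := Real.sq_sqrt hlog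
  have hnn : ∀ x, 0 ≤ stdNormalPdf x * stdNormalCdf x ^ m := fun x =>
    mul_nonneg (stdNormalPdf_pos x).le (pow_nonneg (stdNormalCdf_nonneg x) m)
  have h1 : ∫ x in Set.Ioi a, a ^ 2 * (stdNormalPdf x * stdNormalCdf x ^ m)
      ≤ ∫ x in Set.Ioi a, x ^ 2 * stdNormalPdf x * stdNormalCdf x ^ m := by
    refine setIntegral_mono_on ((integrable_stdNormalPdf_mul_pow m).const_mul _).integrableOn
      (integrable_sq_mul_stdNormalPdf_mul_pow m).integrableOn measurableSet_Ioi fun x hx => ?_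
    rw [mul_assoc (x ^ 2)]
    exact mul_le_mul_of_nonneg_right (pow_le_pow_left₀ ha0 (le_of_lt hx) 2) (hnn x)
  have h2 : ∫ x in Set.Ioi a, x ^ 2 * stdNormalPdf x * stdNormalCdf x ^ m
      ≤ ∫ x, x ^ 2 * stdNormalPdf x * stdNormalCdf x ^ m :=
    setIntegral_le_integral (integrable_sq_mul_stdNormalPdf_mul_pow m)
      (ae_of_all _ fun x => by
        simp only [Pi.zero_apply, mul_assoc]
        exact mul_nonneg (sq_nonneg x) (hnn x))
  rw [integral_const_mul] at h1
  have h3 := mul_le_mul_of_nonneg_left (h1.trans h2) hm.le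
  have h4 := integral_Ioi_stdNormalPdf_mul_pow m a
  rw [mul_left_comm, h4, hsq] at h3
  refine le_trans ?_ h3
  rw [mul_comm]
  exact mul_le_mul_of_nonneg_left (by linarith) hlog

/-- As `K → ∞`, `E[K·φ(X)²·Φ(X)^{K−3}] = Θ((log K)/K²)` for `X ~ N(0,1)`;
the expectation equals `K·∫ φ(x)³·Φ(x)^{K−3} dx`. -/
theorem argmax_score_moment_asymptotics :
    ∃ c₁ c₂ : ℝ, 0 < c₁ ∧ 0 < c₂ ∧ ∃ K₀ : ℕ, ∀ K : ℕ, K₀ ≤ K →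
      c₁ * (Real.log K / (K : ℝ) ^ 2)
          ≤ (K : ℝ) * ∫ x : ℝ, stdNormalPdf x ^ 3 * stdNormalCdf x ^ (K - 3)
        ∧ (K : ℝ) * (∫ x : ℝ, stdNormalPdf x ^ 3 * stdNormalCdf x ^ (K - 3))
            ≤ c₂ * (Real.log K / (K : ℝ) ^ 2) := by
  set d := 1 - Real.exp (-((Real.sqrt (2 * Real.pi))⁻¹ * Real.exp (-1))) with hd
  set B := ∫ x, Real.exp (x ^ 2 / 4) * stdNormalPdf x with hB
  have hd0 : 0 < d := by
    rw [hd, sub_pos, Real.exp_lt_one_iff, neg_lt_zero]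
    positivity
  have hd1 : d < 1 := by
    rw [hd]
    linarith [Real.exp_pos (-((Real.sqrt (2 * Real.pi))⁻¹ * Real.exp (-1)))]
  have hB0 : 0 ≤ B := integral_nonneg fun x =>
    mul_nonneg (Real.exp_nonneg _) (stdNormalPdf_pos x).le
  refine ⟨d, 8 * (4 * B + 4), hd0, by positivity, max 4 ⌈Real.exp (2 / d)⌉₊, fun K hK => ?_⟩
  obtain ⟨m, rfl⟩ : ∃ m, K = m + 3 := ⟨K - 3, by have := le_of_max_le_left hK; omega⟩
  have hm1 : (1 : ℝ) ≤ m := by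
    have := le_of_max_le_left hK
    exact_mod_cast (by omega : 1 ≤ m)
  have hK0 : (0 : ℝ) < (m + 3 : ℕ) := by positivity
  have hlogK : 2 / d ≤ Real.log (m + 3 : ℕ) := by
    rw [Real.le_log_iff_exp_le hK0]
    exact Nat.ceil_le.1 (le_of_max_le_right hK)
  have hlog : 2 ≤ d * Real.log (m + 3 : ℕ) := by
    rwa [div_le_iff₀' hd0] at hlogK
  have hlog1 : 1 ≤ Real.log (m + 3 : ℕ) := by
    nlinarith
  have hcast : ((m + 2 : ℕ) : ℝ) + 1 = (m + 3 : ℕ) := by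
    push_cast
    ring
  have hupper := integral_sq_mul_stdNormalPdf_mul_pow_le (m + 2)
  have hlower := le_integral_sq_mul_stdNormalPdf_mul_pow (m + 2)
  have hone := integral_stdNormalPdf_mul_pow_le (m + 2)
  have hparts := integral_stdNormalPdf_cube_mul_pow m
  have hsplit : ∫ x, (x ^ 2 - 1) * stdNormalPdf x * stdNormalCdf x ^ (m + 2)
      = (∫ x, x ^ 2 * stdNormalPdf x * stdNormalCdf x ^ (m + 2))
        - ∫ x, stdNormalPdf x * stdNormalCdf x ^ (m + 2) := by
    rw [← integral_sub (integrable_sq_mul_stdNormalPdf_mul_pow _)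
      (integrable_stdNormalPdf_mul_pow _)]
    congr 1
    funext x
    ring
  have hnn : 0 ≤ ∫ x, stdNormalPdf x * stdNormalCdf x ^ (m + 2) := integral_nonneg fun x =>
    mul_nonneg (stdNormalPdf_pos x).le (pow_nonneg (stdNormalCdf_nonneg x) _)
  rw [hsplit] at hparts
  rw [hcast] at hupper hlower hone
  rw [← hB] at hupper
  rw [← hd] at hlower
  rw [Nat.add_sub_cancel]
  set I := ∫ x, stdNormalPdf x ^ 3 * stdNormalCdf x ^ m
  set S := ∫ x, x ^ 2 * stdNormalPdf x * stdNormalCdf x ^ (m + 2)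
  set T := ∫ x, stdNormalPdf x * stdNormalCdf x ^ (m + 2)
  set L := Real.log (m + 3 : ℕ)
  have hKm : ((m + 3 : ℕ) : ℝ) = m + 3 := by push_cast; ring
  set K : ℝ := ((m + 3 : ℕ) : ℝ)
  have hid : (m + 1) * (m + 2) * (K * I) = 2 * (K * S - K * T) := by
    linear_combination K * hparts
  have hKI : 0 ≤ K * I := mul_nonneg hK0.le <| integral_nonneg fun x =>
    mul_nonneg (pow_pos (stdNormalPdf_pos x) 3).le (pow_nonneg (stdNormalCdf_nonneg x) _)
  have hKT : 0 ≤ K * T := mul_nonneg hK0.le hnn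
  have hK_ge : ((m : ℝ) + 1) * (m + 2) ≤ K ^ 2 := by
    rw [hKm]
    nlinarith
  have hK_le : K ^ 2 ≤ 4 * (((m : ℝ) + 1) * (m + 2)) := by
    rw [hKm]
    nlinarith
  constructor
  · rw [← mul_div_assoc, div_le_iff₀ (by positivity)]
    nlinarith [mul_le_mul_of_nonneg_right hK_ge hKI]
  · rw [← mul_div_assoc, le_div_iff₀ (by positivity)]
    nlinarith [mul_le_mul_of_nonneg_right hK_le hKI, mul_le_mul_of_nonneg_left hlog1 hB0]
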